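/- arXiv:2506.09618 — 2 statements merged into one kernel-verified Lean document; each statement's English description precedes it below -/
import Mathlib

section
/- Let C be an arbitrary set of corner minors of M and let W be an admissible set of C such that P_W(C) is a minimal prime of I(C). If W ≠ ∅, then x₁₁ ∈ W, and moreover P_W(C) is generated by variables, i.e., P_W(C) = (x_{ij} : x_{ij} ∈ W). -/
open MvPolynomial

/-- A 2-minor `[a₁,a₂|b₁,b₂]` (with `a₁ < a₂`, `b₁ < b₂`) of the `m × n` matrix
of indeterminates `M = (x_{ij})`. -/
structure Minor2 (m n : ℕ) where
  a1 : Fin m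
  a2 : Fin m
  b1 : Fin n
  b2 : Fin n
  ha : a1 < a2
  hb : b1 < b2

namespace Minor2

variable {m n : ℕ}

/-- The vertex set of a 2-minor. -/
def vertexSet (δ : Minor2 m n) : Set (Fin m × Fin n) :=
  {(δ.a1, δ.b1), (δ.a1, δ.b2), (δ.a2, δ.b1), (δ.a2, δ.b2)}

/-- `{p,q}` is one of the two vertical edges of the minor `δ`. -/
def VertEdge (δ : Minor2 m n) (p q : Fin m × Fin n) : Prop :=
  ({p, q} : Set (Fin m × Fin n)) = {(δ.a1, δ.b1), (δ.a2, δ.b1)} ∨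
  ({p, q} : Set (Fin m × Fin n)) = {(δ.a1, δ.b2), (δ.a2, δ.b2)}

/-- `{p,q}` is one of the two horizontal edges of the minor `δ`. -/
def HorizEdge (δ : Minor2 m n) (p q : Fin m × Fin n) : Prop :=
  ({p, q} : Set (Fin m × Fin n)) = {(δ.a1, δ.b1), (δ.a1, δ.b2)} ∨
  ({p, q} : Set (Fin m × Fin n)) = {(δ.a2, δ.b1), (δ.a2, δ.b2)}

/-- `{p,q}` is an edge (vertical or horizontal) of the minor `δ`. -/
def IsEdge (δ : Minor2 m n) (p q : Fin m × Fin n) : Prop :=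
  δ.VertEdge p q ∨ δ.HorizEdge p q

/-- The binomial `f_δ = x_{a₁b₁}x_{a₂b₂} − x_{a₁b₂}x_{a₂b₁}` of the 2-minor `δ`. -/
noncomputable def binom (K : Type*) [Field K] (δ : Minor2 m n) : MvPolynomial (Fin m × Fin n) K :=
  X (δ.a1, δ.b1) * X (δ.a2, δ.b2) - X (δ.a1, δ.b2) * X (δ.a2, δ.b1)

end Minor2

/-- The vertex set `V(C)` of a collection `C` of 2-minors. -/
def vertexSetOf {m n : ℕ} (C : Set (Minor2 m n)) : Set (Fin m × Fin n) :=
  ⋃ δ ∈ C, δ.vertexSet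

/-- The binomial ideal `I(C)` generated by the binomials of the minors in `C`. -/
noncomputable def minorIdeal (K : Type*) [Field K] {m n : ℕ} (C : Set (Minor2 m n)) :
    Ideal (MvPolynomial (Fin m × Fin n) K) :=
  Ideal.span {f | ∃ δ ∈ C, f = Minor2.binom K δ}

/-- Two positions are joined by a vertical edge of some minor of `C`. -/
def vertAdj {m n : ℕ} (C : Set (Minor2 m n)) (p q : Fin m × Fin n) : Prop :=
  ∃ δ ∈ C, δ.VertEdge p q

/-- Two positions are joined by a horizontal edge of some minor of `C`. -/
def horizAdj {m n : ℕ} (C : Set (Minor2 m n)) (p q : Fin m × Fin n) : Prop :=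
  ∃ δ ∈ C, δ.HorizEdge p q

/-- The maximal vertical interval of `C` containing a position, encoded as the class of the
position under connectivity by vertical edges of minors of `C`. -/
def vClass {m n : ℕ} (C : Set (Minor2 m n)) (p : Fin m × Fin n) : Quot (vertAdj C) :=
  Quot.mk _ p

/-- The maximal horizontal interval of `C` containing a position. -/
def hClass {m n : ℕ} (C : Set (Minor2 m n)) (p : Fin m × Fin n) : Quot (horizAdj C) :=
  Quot.mk _ p

/-- The monomial map `φ` with `φ(x_{ab}) = h_i v_j`, where `H_i` and `V_j` are the maximal
horizontal and vertical intervals of `C` containing `x_{ab}` (variables not appearing in any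
minor of `C` are sent to products of fresh variables, so that the kernel of `φ` is the
extension to `S` of the toric ideal `J_C ⊆ S_C`). -/
noncomputable def phiC (K : Type*) [Field K] {m n : ℕ} (C : Set (Minor2 m n)) :
    MvPolynomial (Fin m × Fin n) K →ₐ[K]
      MvPolynomial (Quot (horizAdj C) ⊕ Quot (vertAdj C)) K :=
  aeval fun p => X (Sum.inl (hClass C p)) * X (Sum.inr (vClass C p))

/-- The toric ideal `J_C = ker φ`. -/
noncomputable def toricIdeal (K : Type*) [Field K] {m n : ℕ} (C : Set (Minor2 m n)) :
    Ideal (MvPolynomial (Fin m × Fin n) K) :=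
  RingHom.ker (phiC K C)

/-- A subset `W ⊆ V(C)` is admissible if for every `δ ∈ C` either `W ∩ V(δ) = ∅`
or `W` contains an edge of `δ`. -/
def Admissible {m n : ℕ} (C : Set (Minor2 m n)) (W : Set (Fin m × Fin n)) : Prop :=
  W ⊆ vertexSetOf C ∧
    ∀ δ ∈ C, W ∩ δ.vertexSet = ∅ ∨ ∃ p q, p ∈ W ∧ q ∈ W ∧ δ.IsEdge p q

/-- `C' = {δ ∈ C : V(δ) ∩ W = ∅}`. -/
def minorsAvoiding {m n : ℕ} (C : Set (Minor2 m n)) (W : Set (Fin m × Fin n)) :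
    Set (Minor2 m n) :=
  {δ ∈ C | δ.vertexSet ∩ W = ∅}

/-- The ideal generated by the variables with index in `W`. -/
noncomputable def varIdeal (K : Type*) [Field K] {m n : ℕ} (W : Set (Fin m × Fin n)) :
    Ideal (MvPolynomial (Fin m × Fin n) K) :=
  Ideal.span ((fun p => (X p : MvPolynomial (Fin m × Fin n) K)) '' W)

/-- The prime ideal `P_W(C) = (x_{ij} : x_{ij} ∈ W) + J_{C'}`,
where `C' = {δ ∈ C : V(δ) ∩ W = ∅}`. -/
noncomputable def PW (K : Type*) [Field K] {m n : ℕ} (C : Set (Minor2 m n))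
    (W : Set (Fin m × Fin n)) : Ideal (MvPolynomial (Fin m × Fin n) K) :=
  varIdeal K W + toricIdeal K (minorsAvoiding C W)

/-- A cycle `σ : h_{i₁}, v_{j₁}, h_{i₂}, v_{j₂}, …, h_{i_r}, v_{j_r}` (`r ≥ 2`) of the
bipartite graph `G(C)`, recorded by the intersection vertices
`p k = H_{i_k} ∩ V_{j_k}` and `q k = H_{i_{k+1}} ∩ V_{j_k}` (indices cyclic, `r = len + 2`). -/
structure CycleIn {m n : ℕ} (C : Set (Minor2 m n)) where
  len : ℕ
  p : Fin (len + 2) → Fin m × Fin n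
  q : Fin (len + 2) → Fin m × Fin n
  p_mem : ∀ k, p k ∈ vertexSetOf C
  q_mem : ∀ k, q k ∈ vertexSetOf C
  shareV : ∀ k, vClass C (p k) = vClass C (q k)
  shareH : ∀ k, hClass C (q k) = hClass C (p (k + 1))
  injH : Function.Injective fun k => hClass C (p k)
  injV : Function.Injective fun k => vClass C (p k)

/-- The binomial `f_σ` associated to a cycle `σ` of `G(C)`. -/
noncomputable def cycleBinom (K : Type*) [Field K] {m n : ℕ} {C : Set (Minor2 m n)}
    (σ : CycleIn C) : MvPolynomial (Fin m × Fin n) K :=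
  (∏ k, X (σ.p k)) - (∏ k, X (σ.q k))

/-!
Let `o` be a vertex common to all minors of `C`. If `t` is the vertex opposite to `o` in a minor
`δ`, then `±f_δ` is linear in `x_t` with leading coefficient `x_o`, and no such `x_t` occurs
in any of the coefficients or constant terms. So where `x_o ≠ 0` the equations just
solve for the opposite vertices, and their zero set is the graph of a rational map: only one
minimal prime of `I(C)` misses `x_o`, and it contains no variable at all. As `P_W(C)` contains
exactly the variables in `W`, a nonempty `W` must contain `o`. Then no minor of `C` avoids `W`, so
the toric part of `P_W(C)` vanishes.
-/

section GraphIdeal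

variable {σ R : Type*} [CommRing R]

/-- The ideal generated by the equations `z * x_t = p t`, `t ∈ T`. When `z` and the `p t` do not
involve the variables in `T`, these cut out the graph of the rational map `x_t = p t / z` on the
locus `z ≠ 0`. -/
noncomputable def graphIdeal (z : MvPolynomial σ R) (p : σ → MvPolynomial σ R)
    (T : Set σ) : Ideal (MvPolynomial σ R) :=
  Ideal.span ((fun t => z * X t - p t) '' T)

variable {z : MvPolynomial σ R} {p : σ → MvPolynomial σ R} {T : Set σ}

theorem exists_pow_mul_sub_mem_graphIdeal (hz : z ∈ supported R Tᶜ)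
    (hp : ∀ t ∈ T, p t ∈ supported R Tᶜ) (f : MvPolynomial σ R) :
    ∃ N : ℕ, ∃ g ∈ supported R Tᶜ, z ^ N * f - g ∈ graphIdeal z p T := by
  induction f using MvPolynomial.induction_on with
  | C a => exact ⟨0, C a, (supported R Tᶜ).algebraMap_mem a, by simp⟩
  | add f₁ f₂ ih₁ ih₂ =>
    obtain ⟨N₁, g₁, hg₁, h₁⟩ := ih₁
    obtain ⟨N₂, g₂, hg₂, h₂⟩ := ih₂
    refine ⟨N₁ + N₂, z ^ N₂ * g₁ + z ^ N₁ * g₂,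
      add_mem (mul_mem (pow_mem hz _) hg₁) (mul_mem (pow_mem hz _) hg₂), ?_⟩
    convert add_mem (Ideal.mul_mem_left _ (z ^ N₂) h₁) (Ideal.mul_mem_left _ (z ^ N₁) h₂) using 1
    ring
  | mul_X f s ih =>
    obtain ⟨N, g, hg, h⟩ := ih
    by_cases hs : s ∈ T
    · have hgen : z * X s - p s ∈ graphIdeal z p T := Ideal.subset_span ⟨s, hs, rfl⟩
      refine ⟨N + 1, g * p s, mul_mem hg (hp s hs), ?_⟩
      convert add_mem (Ideal.mul_mem_left _ (z * X s) h) (Ideal.mul_mem_left _ g hgen) using 1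
      ring
    · refine ⟨N, g * X s, mul_mem hg (Algebra.subset_adjoin ⟨s, hs, rfl⟩), ?_⟩
      convert Ideal.mul_mem_right (X s) _ h using 1
      ring

variable [IsDomain R]

open Classical in
/-- The parametrization `x_t = p t / z` (`t ∈ T`), `x_s = x_s` (`s ∉ T`) of the graph cut out by
`graphIdeal z p T`. -/
noncomputable def graphParam (z : MvPolynomial σ R) (p : σ → MvPolynomial σ R) (T : Set σ) :
    MvPolynomial σ R →ₐ[R] FractionRing (MvPolynomial σ R) :=
  aeval fun s =>
    if s ∈ T then algebraMap (MvPolynomial σ R) _ (p s) / algebraMap (MvPolynomial σ R) _ z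
    else algebraMap (MvPolynomial σ R) _ (X s)

theorem graphParam_X_of_mem {t : σ} (ht : t ∈ T) :
    graphParam z p T (X t) = algebraMap _ _ (p t) / algebraMap _ _ z := by
  simp only [graphParam, aeval_X, if_pos ht]

theorem graphParam_X_of_notMem {s : σ} (hs : s ∉ T) :
    graphParam z p T (X s) = algebraMap (MvPolynomial σ R) _ (X s) := by
  simp only [graphParam, aeval_X, if_neg hs]

theorem graphParam_of_mem_supported {f : MvPolynomial σ R} (hf : f ∈ supported R Tᶜ) :
    graphParam z p T f = algebraMap _ _ f := by
  have heq : Set.EqOn (graphParam z p T)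
      (IsScalarTower.toAlgHom R (MvPolynomial σ R) (FractionRing (MvPolynomial σ R)))
      (X '' Tᶜ) := by
    rintro _ ⟨s, hs, rfl⟩
    exact graphParam_X_of_notMem hs
  exact AlgHom.eqOn_adjoin_iff.2 heq hf

theorem X_notMem_ker_graphParam (hz0 : z ≠ 0) (hp0 : ∀ t ∈ T, p t ≠ 0) (s : σ) :
    X s ∉ RingHom.ker (graphParam z p T) := by
  rw [RingHom.mem_ker]
  by_cases hs : s ∈ T
  · rw [graphParam_X_of_mem hs]
    exact div_ne_zero (by simpa using hp0 s hs) (by simpa using hz0)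
  · rw [graphParam_X_of_notMem hs]
    simp

theorem graphIdeal_le_ker_graphParam (hz0 : z ≠ 0) (hz : z ∈ supported R Tᶜ)
    (hp : ∀ t ∈ T, p t ∈ supported R Tᶜ) :
    graphIdeal z p T ≤ RingHom.ker (graphParam z p T) := by
  refine Ideal.span_le.2 ?_
  rintro _ ⟨t, ht, rfl⟩
  have hz0' : algebraMap _ (FractionRing (MvPolynomial σ R)) z ≠ 0 := by simpa using hz0
  rw [SetLike.mem_coe, RingHom.mem_ker, map_sub, map_mul, graphParam_X_of_mem ht,
    graphParam_of_mem_supported hz, graphParam_of_mem_supported (hp t ht),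
    mul_div_cancel₀ _ hz0', sub_self]

theorem mem_ker_graphParam_iff (hz0 : z ≠ 0) (hz : z ∈ supported R Tᶜ)
    (hp : ∀ t ∈ T, p t ∈ supported R Tᶜ) {f : MvPolynomial σ R} :
    f ∈ RingHom.ker (graphParam z p T) ↔ ∃ N : ℕ, z ^ N * f ∈ graphIdeal z p T := by
  have hle := graphIdeal_le_ker_graphParam hz0 hz hp
  constructor
  · intro hf
    obtain ⟨N, g, hg, hfg⟩ := exists_pow_mul_sub_mem_graphIdeal hz hp f
    have hf0 : graphParam z p T f = 0 := hf
    have hg0 : g = 0 := by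
      simpa [RingHom.mem_ker, hf0, graphParam_of_mem_supported hg] using hle hfg
    exact ⟨N, by simpa [hg0] using hfg⟩
  · rintro ⟨N, hN⟩
    have hzker : z ∉ RingHom.ker (graphParam z p T) := by
      simpa [RingHom.mem_ker, graphParam_of_mem_supported hz] using hz0
    have hprime := RingHom.ker_isPrime (graphParam z p T)
    exact (hprime.mem_or_mem (hle hN)).resolve_left (mt (hprime.mem_of_pow_mem N) hzker)

theorem eq_ker_graphParam_of_mem_minimalPrimes (hz0 : z ≠ 0) (hz : z ∈ supported R Tᶜ)
    (hp : ∀ t ∈ T, p t ∈ supported R Tᶜ) {P : Ideal (MvPolynomial σ R)}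
    (hP : P ∈ (graphIdeal z p T).minimalPrimes) (hzP : z ∉ P) :
    P = RingHom.ker (graphParam z p T) := by
  have hprime : P.IsPrime := hP.1.1
  have hker : RingHom.ker (graphParam z p T) ≤ P := by
    intro f hf
    obtain ⟨N, hN⟩ := (mem_ker_graphParam_iff hz0 hz hp).1 hf
    exact (hprime.mem_or_mem (hP.1.2 hN)).resolve_left (mt (hprime.mem_of_pow_mem N) hzP)
  exact le_antisymm
    (hP.2 ⟨RingHom.ker_isPrime _, graphIdeal_le_ker_graphParam hz0 hz hp⟩ hker) hker

end GraphIdeal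

section CommonVertex

variable {m n : ℕ} {C : Set (Minor2 m n)} {o : Fin m × Fin n}

/-- The vertices lying in a minor of `C` together with `o`, diagonally opposite to `o`. -/
def oppositeVertices (C : Set (Minor2 m n)) (o : Fin m × Fin n) : Set (Fin m × Fin n) :=
  {t | t.1 ≠ o.1 ∧ t.2 ≠ o.2 ∧ ∃ δ ∈ C, o ∈ δ.vertexSet ∧ t ∈ δ.vertexSet}

theorem Minor2.exists_opposite_vertex {δ : Minor2 m n} (ho : o ∈ δ.vertexSet) :
    ∃ t ∈ δ.vertexSet, t.1 ≠ o.1 ∧ t.2 ≠ o.2 := by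
  have ha := δ.ha.ne
  have hb := δ.hb.ne
  rcases ho with rfl | rfl | rfl | rfl
  · exact ⟨(δ.a2, δ.b2), by simp [vertexSet], ha.symm, hb.symm⟩
  · exact ⟨(δ.a2, δ.b1), by simp [vertexSet], ha.symm, hb⟩
  · exact ⟨(δ.a1, δ.b2), by simp [vertexSet], ha, hb.symm⟩
  · exact ⟨(δ.a1, δ.b1), by simp [vertexSet], ha, hb⟩

theorem Minor2.binom_eq_or_eq_neg (K : Type*) [Field K] {δ : Minor2 m n} {t : Fin m × Fin n}
    (ho : o ∈ δ.vertexSet) (ht : t ∈ δ.vertexSet) (h1 : t.1 ≠ o.1) (h2 : t.2 ≠ o.2) :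
    δ.binom K = X o * X t - X (o.1, t.2) * X (t.1, o.2) ∨
      δ.binom K = -(X o * X t - X (o.1, t.2) * X (t.1, o.2)) := by
  unfold binom
  rcases ho with rfl | rfl | rfl | rfl <;> rcases ht with rfl | rfl | rfl | rfl <;>
    first
    | exact absurd rfl h1
    | exact absurd rfl h2
    | exact .inl (by ring1)
    | exact .inr (by ring1)

theorem minorIdeal_eq_graphIdeal (K : Type*) [Field K] (hC : ∀ δ ∈ C, o ∈ δ.vertexSet) :
    minorIdeal K C =
      graphIdeal (X o) (fun t => X (o.1, t.2) * X (t.1, o.2)) (oppositeVertices C o) := by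
  apply le_antisymm <;> refine Ideal.span_le.2 ?_
  · rintro _ ⟨δ, hδ, rfl⟩
    obtain ⟨t, ht, h1, h2⟩ := Minor2.exists_opposite_vertex (hC δ hδ)
    have hgen : X o * X t - X (o.1, t.2) * X (t.1, o.2) ∈ graphIdeal (X o)
        (fun t => X (o.1, t.2) * X (t.1, o.2) : _ → MvPolynomial _ K) (oppositeVertices C o) :=
      Ideal.subset_span ⟨t, ⟨h1, h2, δ, hδ, hC δ hδ, ht⟩, rfl⟩
    rcases Minor2.binom_eq_or_eq_neg K (hC δ hδ) ht h1 h2 with h | h <;> rw [h]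
    exacts [hgen, neg_mem hgen]
  · rintro _ ⟨t, ⟨h1, h2, δ, hδ, ho, ht⟩, rfl⟩
    have hgen : δ.binom K ∈ minorIdeal K C := Ideal.subset_span ⟨δ, hδ, rfl⟩
    rcases Minor2.binom_eq_or_eq_neg K ho ht h1 h2 with h | h <;> rw [h] at hgen
    exacts [hgen, neg_mem_iff.1 hgen]

theorem X_notMem_of_mem_minimalPrimes_minorIdeal {K : Type*} [Field K]
    (hC : ∀ δ ∈ C, o ∈ δ.vertexSet) {P : Ideal (MvPolynomial (Fin m × Fin n) K)}
    (hP : P ∈ (minorIdeal K C).minimalPrimes) (hoP : X o ∉ P) (p : Fin m × Fin n) : X p ∉ P := by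
  have ho : X o ∈ supported K (oppositeVertices C o)ᶜ := X_mem_supported.2 fun h => h.1 rfl
  have hcross : ∀ t ∈ oppositeVertices C o,
      X (o.1, t.2) * X (t.1, o.2) ∈ supported K (oppositeVertices C o)ᶜ := fun _ _ =>
    mul_mem (X_mem_supported.2 fun h => h.1 rfl) (X_mem_supported.2 fun h => h.2.1 rfl)
  rw [minorIdeal_eq_graphIdeal K hC] at hP
  rw [eq_ker_graphParam_of_mem_minimalPrimes (X_ne_zero o) ho hcross hP hoP]
  exact X_notMem_ker_graphParam (X_ne_zero o)
    (fun _ _ => mul_ne_zero (X_ne_zero _) (X_ne_zero _)) p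

end CommonVertex

section AdmissiblePrime

variable (K : Type*) [Field K] {m n : ℕ}

theorem toricIdeal_le_ker_aeval {A : Type*} [CommRing A] [Algebra K A] {D : Set (Minor2 m n)}
    {x : Fin m × Fin n → A} (hx : ∀ p q, horizAdj D p q → x p = x q) :
    toricIdeal K D ≤ RingHom.ker (aeval x : MvPolynomial (Fin m × Fin n) K →ₐ[K] A) := by
  let χ : MvPolynomial (Quot (horizAdj D) ⊕ Quot (vertAdj D)) K →ₐ[K] A :=
    aeval (Sum.elim (Quot.lift x hx) 1)
  have hfac : aeval x = χ.comp (phiC K D) := by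
    ext p
    simp [χ, phiC, hClass]
  intro f hf
  rw [RingHom.mem_ker, hfac, AlgHom.comp_apply, show phiC K D f = 0 from hf, map_zero]

theorem toricIdeal_empty : toricIdeal K (∅ : Set (Minor2 m n)) = ⊥ := by
  have hle := toricIdeal_le_ker_aeval K (D := (∅ : Set (Minor2 m n)))
    (x := (X : _ → MvPolynomial (Fin m × Fin n) K)) (by rintro p q ⟨δ, hδ, -⟩; exact hδ.elim)
  refine eq_bot_iff.2 fun f hf => ?_
  simpa using hle hf

theorem Minor2.HorizEdge.mem_vertexSet {δ : Minor2 m n} {p q : Fin m × Fin n}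
    (h : δ.HorizEdge p q) : p ∈ δ.vertexSet ∧ q ∈ δ.vertexSet := by
  have hsub : ({p, q} : Set (Fin m × Fin n)) ⊆ δ.vertexSet := by
    rcases h with h | h <;> rw [h] <;> rintro _ (rfl | rfl) <;> simp [vertexSet]
  exact ⟨hsub (by simp), hsub (by simp)⟩

variable (C : Set (Minor2 m n)) {W : Set (Fin m × Fin n)}

theorem PW_le_ker_aeval_indicator :
    PW K C W ≤ RingHom.ker (aeval (Wᶜ.indicator 1) :
      MvPolynomial (Fin m × Fin n) K →ₐ[K] K) := by
  refine sup_le (Ideal.span_le.2 ?_) (toricIdeal_le_ker_aeval K ?_)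
  · rintro _ ⟨p, hp, rfl⟩
    simp [RingHom.mem_ker, hp]
  · rintro p q ⟨δ, ⟨-, hδ⟩, hpq⟩
    have havoid : Disjoint δ.vertexSet W := Set.disjoint_iff_inter_eq_empty.2 hδ
    obtain ⟨hp, hq⟩ := hpq.mem_vertexSet
    simp [havoid.notMem_of_mem_left hp, havoid.notMem_of_mem_left hq]

theorem X_mem_PW_iff {p : Fin m × Fin n} : X p ∈ PW K C W ↔ p ∈ W := by
  refine ⟨fun h => ?_, fun h => Ideal.mem_sup_left (Ideal.subset_span ⟨p, h, rfl⟩)⟩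
  by_contra hp
  simpa [RingHom.mem_ker, hp] using PW_le_ker_aeval_indicator K C h

variable {C}

theorem PW_eq_varIdeal_of_mem {o : Fin m × Fin n} (hC : ∀ δ ∈ C, o ∈ δ.vertexSet) (ho : o ∈ W) :
    PW K C W = varIdeal K W := by
  have hempty : minorsAvoiding C W = ∅ := Set.eq_empty_of_forall_notMem fun δ ⟨hδ, havoid⟩ =>
    havoid.le ⟨hC δ hδ, ho⟩
  rw [PW, hempty, toricIdeal_empty, Submodule.add_eq_sup, sup_bot_eq]

end AdmissiblePrime

theorem statement8_general (K : Type*) [Field K] {m n : ℕ} {C : Set (Minor2 m n)}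
    {o : Fin m × Fin n} (hC : ∀ δ ∈ C, o ∈ δ.vertexSet) {W : Set (Fin m × Fin n)}
    (hmin : PW K C W ∈ (minorIdeal K C).minimalPrimes) (hne : W.Nonempty) :
    o ∈ W ∧ PW K C W = varIdeal K W := by
  have ho : o ∈ W := by
    by_contra ho
    obtain ⟨w, hw⟩ := hne
    exact X_notMem_of_mem_minimalPrimes_minorIdeal hC hmin (mt (X_mem_PW_iff K C).1 ho) w
      ((X_mem_PW_iff K C).2 hw)
  exact ⟨ho, PW_eq_varIdeal_of_mem K hC ho⟩

theorem statement8 (K : Type*) [Field K] (m n : ℕ) [NeZero m] [NeZero n]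
    (C : Set (Minor2 m n)) (hC : ∀ δ ∈ C, δ.a1 = 0 ∧ δ.b1 = 0)
    (W : Set (Fin m × Fin n)) (hW : Admissible C W)
    (hmin : PW K C W ∈ (minorIdeal K C).minimalPrimes) (hne : W ≠ ∅) :
    ((0 : Fin m), (0 : Fin n)) ∈ W ∧ PW K C W = varIdeal K W := by
  exact statement8_general K (fun δ hδ => by simp [Minor2.vertexSet, hC δ hδ]) hmin
    (Set.nonempty_iff_ne_empty.2 hne)
end

section
/- Let C be an arbitrary set of corner minors of M, and let σ be a cycle in the associated bipartite graph G(C). Let H₁ and V₁ denote the maximal horizontal and vertical intervals of C containing the vertex x₁₁, with corresponding vertices h₁ and v₁ of G(C). Then x₁₁ f_σ ∈ I(C) if and only if σ passes through v₁ or σ passes through h₁. -/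
open MvPolynomial

/-!
Write `z = x₀₀` (the `x₁₁` of the paper). The generators of `I(C)` are `z x_{ab} - x_{0b} x_{a0}`,
so modulo `I(C)` every vertex satisfies `z x_{ab} = x_{0b} x_{a0}`. In the presence of `z`, a step
along the cycle therefore replaces one of its `q`-vertices by a `p`-vertex at the cost of exchanging
the border variable `x_{a0}` of one row for that of the next. When the cycle passes through the
first column, `p` and `q` there are themselves such border variables, and the exchanges close up;
the first row is symmetric.

Conversely, the differential operator `∂/∂z + ∑ x_{ab} ∂²/∂x_{a0} ∂x_{0b}`, followed by setting the
first row and column to zero, vanishes on `I(C)` and sends `z f` to `f` whenever `f` involves no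
border variable. If `σ` avoids `v₁` and `h₁`, then `f_σ` is such an `f`, and `f_σ ≠ 0`.
-/

/-- A corner minor: one whose upper left vertex is `(0, 0)`. -/
def Minor2.IsCorner {m n : ℕ} [NeZero m] [NeZero n] (δ : Minor2 m n) : Prop :=
  δ.a1 = 0 ∧ δ.b1 = 0

section Intervals

variable {m n : ℕ} {C : Set (Minor2 m n)} {p q : Fin m × Fin n}

theorem vertAdj.snd_eq (h : vertAdj C p q) : p.2 = q.2 := by
  obtain ⟨δ, -, h | h⟩ := h <;>
    rcases Set.pair_eq_pair_iff.mp h with ⟨rfl, rfl⟩ | ⟨rfl, rfl⟩ <;> rfl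

theorem horizAdj.fst_eq (h : horizAdj C p q) : p.1 = q.1 := by
  obtain ⟨δ, -, h | h⟩ := h <;>
    rcases Set.pair_eq_pair_iff.mp h with ⟨rfl, rfl⟩ | ⟨rfl, rfl⟩ <;> rfl

theorem snd_eq_of_vClass_eq (h : vClass C p = vClass C q) : p.2 = q.2 :=
  congrArg (Quot.lift Prod.snd fun _ _ => vertAdj.snd_eq) h

theorem fst_eq_of_hClass_eq (h : hClass C p = hClass C q) : p.1 = q.1 :=
  congrArg (Quot.lift Prod.fst fun _ _ => horizAdj.fst_eq) h

variable [NeZero m] [NeZero n]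

theorem vClass_eq_vClass_top (hC : ∀ δ ∈ C, δ.IsCorner) (hp : p ∈ vertexSetOf C) :
    vClass C p = vClass C (0, p.2) := by
  obtain ⟨δ, hδ, hp⟩ := Set.mem_iUnion₂.mp hp
  obtain ⟨ha, -⟩ := hC δ hδ
  rcases hp with rfl | rfl | rfl | rfl
  · rw [ha]
  · rw [ha]
  · exact (Quot.sound ⟨δ, hδ, Or.inl (by rw [ha])⟩).symm
  · exact (Quot.sound ⟨δ, hδ, Or.inr (by rw [ha])⟩).symm

theorem hClass_eq_hClass_left (hC : ∀ δ ∈ C, δ.IsCorner) (hp : p ∈ vertexSetOf C) :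
    hClass C p = hClass C (p.1, 0) := by
  obtain ⟨δ, hδ, hp⟩ := Set.mem_iUnion₂.mp hp
  obtain ⟨-, hb⟩ := hC δ hδ
  rcases hp with rfl | rfl | rfl | rfl
  · rw [hb]
  · exact (Quot.sound ⟨δ, hδ, Or.inl (by rw [hb])⟩).symm
  · rw [hb]
  · exact (Quot.sound ⟨δ, hδ, Or.inr (by rw [hb])⟩).symm

theorem vClass_eq_vClass_zero_iff (hC : ∀ δ ∈ C, δ.IsCorner) (hp : p ∈ vertexSetOf C) :
    vClass C p = vClass C (0, 0) ↔ p.2 = 0 :=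
  ⟨snd_eq_of_vClass_eq, fun h => by rw [vClass_eq_vClass_top hC hp, h]⟩

theorem hClass_eq_hClass_zero_iff (hC : ∀ δ ∈ C, δ.IsCorner) (hp : p ∈ vertexSetOf C) :
    hClass C p = hClass C (0, 0) ↔ p.1 = 0 :=
  ⟨fst_eq_of_hClass_eq, fun h => by rw [hClass_eq_hClass_left hC hp, h]⟩

end Intervals

section Telescoping

variable {M : Type*} [CommMonoid M]

theorem mul_prod_telescope (z : M) {n : ℕ} (P Q : Fin n → M) (c : Fin (n + 1) → M)
    (h : ∀ i, z * (c i.succ * P i) = z * (c i.castSucc * Q i)) :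
    z * (c (Fin.last n) * ∏ i, P i) = z * (c 0 * ∏ i, Q i) := by
  induction n with
  | zero => simp
  | succ n ih =>
    have ih' := ih (fun i => P i.castSucc) (fun i => Q i.castSucc) (fun i => c i.castSucc)
      fun i => h i.castSucc
    rw [Fin.prod_univ_castSucc, Fin.prod_univ_castSucc]
    calc z * (c (Fin.last (n + 1)) * ((∏ i : Fin n, P i.castSucc) * P (Fin.last n)))
        = (∏ i : Fin n, P i.castSucc) * (z * (c (Fin.last n).succ * P (Fin.last n))) := by
          rw [Fin.succ_last]; ac_rfl
      _ = (∏ i : Fin n, P i.castSucc) * (z * (c (Fin.last n).castSucc * Q (Fin.last n))) := by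
          rw [h]
      _ = z * (c (Fin.last n).castSucc * ∏ i : Fin n, P i.castSucc) * Q (Fin.last n) := by ac_rfl
      _ = z * (c 0 * ∏ i : Fin n, Q i.castSucc) * Q (Fin.last n) := by
          rw [ih', Fin.castSucc_zero]
      _ = z * (c 0 * ((∏ i : Fin n, Q i.castSucc) * Q (Fin.last n))) := by ac_rfl

theorem mul_prod_eq_mul_prod_of_cyclic (z : M) {n : ℕ} (P Q c : Fin (n + 1) → M)
    (h : ∀ k, z * (c (k + 1) * P k) = z * (c k * Q k))
    (k₀ : Fin (n + 1)) (hP : P k₀ = c k₀) (hQ : Q k₀ = c (k₀ + 1)) :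
    z * ∏ k, P k = z * ∏ k, Q k := by
  let e : Fin (n + 1) ≃ Fin (n + 1) := Equiv.addLeft (k₀ - Fin.last n)
  have e_last : e (Fin.last n) = k₀ := sub_add_cancel k₀ (Fin.last n)
  have e_add_one (i) : e (i + 1) = e i + 1 := (add_assoc (k₀ - Fin.last n) i 1).symm
  have e_zero : e 0 = k₀ + 1 := by rw [← Fin.last_add_one, e_add_one, e_last]
  have telescope := mul_prod_telescope z (fun i : Fin n => P (e i.castSucc))
    (fun i => Q (e i.castSucc)) (fun i => c (e i)) fun i => by
      rw [← Fin.coeSucc_eq_succ, e_add_one, h]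
  rw [← e.prod_comp P, ← e.prod_comp Q, Fin.prod_univ_castSucc, Fin.prod_univ_castSucc, e_last,
    hP, hQ, mul_comm _ (c k₀), mul_comm _ (c (k₀ + 1)), ← e_zero, ← telescope, e_last]

end Telescoping

section BorderOperator

variable (R : Type*) [CommSemiring R] (m n : ℕ) [NeZero m] [NeZero n]

/-- The substitution of `0` for the border variables, those in the first row or column. -/
noncomputable def borderZero :
    MvPolynomial (Fin m × Fin n) R →ₐ[R] MvPolynomial (Fin m × Fin n) R :=
  aeval fun p => if p.1 = 0 ∨ p.2 = 0 then 0 else X p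

/-- The operator `∂/∂x₀₀ + ∑ x_{ab} ∂²/∂x_{a0} ∂x_{0b}` followed by `borderZero`; it detects
`x₀₀ f` modulo ideals of corner minors. The terms with `a = 0` or `b = 0` are harmless, as
`borderZero` kills their coefficient `x_{ab}`. -/
noncomputable def borderOperator :
    MvPolynomial (Fin m × Fin n) R →ₗ[R] MvPolynomial (Fin m × Fin n) R :=
  (borderZero R m n).toLinearMap ∘ₗ ((pderiv (0, 0)).toLinearMap +
    ∑ a, ∑ b, LinearMap.mulLeft R (X (a, b)) ∘ₗ
      (pderiv (a, 0)).toLinearMap ∘ₗ (pderiv (0, b)).toLinearMap)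

variable {R m n}

theorem borderZero_X (p : Fin m × Fin n) :
    borderZero R m n (X p) = if p.1 = 0 ∨ p.2 = 0 then 0 else X p :=
  aeval_X _ _

theorem borderOperator_apply (f : MvPolynomial (Fin m × Fin n) R) :
    borderOperator R m n f = borderZero R m n (pderiv (0, 0) f) +
      ∑ a, ∑ b, if a = 0 ∨ b = 0 then 0 else
        X (a, b) * borderZero R m n (pderiv (a, 0) (pderiv (0, b) f)) := by
  simp [borderOperator, borderZero_X]

theorem borderOperator_mul (f : MvPolynomial (Fin m × Fin n) R)
    {g : MvPolynomial (Fin m × Fin n) R} (hg : borderZero R m n g = 0)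
    (hcol : ∀ a ≠ 0, borderZero R m n (pderiv (a, 0) g) = 0)
    (hrow : ∀ b ≠ 0, borderZero R m n (pderiv (0, b) g) = 0) :
    borderOperator R m n (f * g) = borderZero R m n f * borderOperator R m n g := by
  simp only [borderOperator_apply, mul_add, Finset.mul_sum]
  refine congrArg₂ _ (by simp [hg])
    (Finset.sum_congr rfl fun a _ => Finset.sum_congr rfl fun b _ => ?_)
  · split_ifs with hab
    · rw [mul_zero]
    · obtain ⟨ha, hb⟩ := not_or.mp hab
      simp [hg, hcol a ha, hrow b hb, mul_left_comm]

theorem borderOperator_X_zero_mul (f : MvPolynomial (Fin m × Fin n) R) :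
    borderOperator R m n (X (0, 0) * f) = borderZero R m n f := by
  have pderiv_pderiv_eq_zero {a : Fin m} {b : Fin n} (ha : a ≠ 0) (hb : b ≠ 0) :
      borderZero R m n (pderiv (a, 0) (pderiv (0, b) (X (0, 0) * f))) = 0 := by
    simp [pderiv_X, borderZero_X, ha.symm, hb.symm]
  rw [borderOperator_apply, Finset.sum_eq_zero fun a _ => Finset.sum_eq_zero fun b _ => ?_]
  · simp [borderZero_X]
  · split_ifs with hab
    · rfl
    · obtain ⟨ha, hb⟩ := not_or.mp hab
      rw [pderiv_pderiv_eq_zero ha hb, mul_zero]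

theorem borderOperator_X_top_mul_X_left {a : Fin m} {b : Fin n} (ha : a ≠ 0) (hb : b ≠ 0) :
    borderOperator R m n (X (0, b) * X (a, 0)) = X (a, b) := by
  have pderiv_pderiv (a' : Fin m) (b' : Fin n) :
      pderiv (a', 0) (pderiv (0, b') (X (0, b) * X (a, 0) : MvPolynomial _ R)) =
        if a = a' ∧ b = b' then 1 else 0 := by
    by_cases hb' : b = b' <;> simp [pderiv_X, Pi.single_apply, hb', ha]
  simp only [borderOperator_apply, pderiv_pderiv]
  rw [Finset.sum_eq_single a, Finset.sum_eq_single b]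
  · simp [pderiv_X, ha, hb]
  · simp +contextual [eq_comm]
  · simp
  · simp +contextual [eq_comm]
  · simp

end BorderOperator

section MinorIdeal

variable {K : Type*} [Field K] {m n : ℕ} [NeZero m] [NeZero n] {C : Set (Minor2 m n)}

theorem Minor2.IsCorner.binom_eq {δ : Minor2 m n} (hδ : δ.IsCorner) :
    δ.binom K = X (0, 0) * X (δ.a2, δ.b2) - X (0, δ.b2) * X (δ.a2, 0) := by
  rw [Minor2.binom, hδ.1, hδ.2]

theorem borderOperator_binom {δ : Minor2 m n} (hδ : δ.IsCorner) :
    borderOperator K m n (δ.binom K) = 0 := by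
  have ha : δ.a2 ≠ 0 := (hδ.1 ▸ δ.ha).ne'
  have hb : δ.b2 ≠ 0 := (hδ.2 ▸ δ.hb).ne'
  rw [hδ.binom_eq, map_sub, borderOperator_X_zero_mul, borderOperator_X_top_mul_X_left ha hb,
    borderZero_X, if_neg (not_or.mpr ⟨ha, hb⟩), sub_self]

theorem borderOperator_mul_binom {δ : Minor2 m n} (hδ : δ.IsCorner)
    (f : MvPolynomial (Fin m × Fin n) K) : borderOperator K m n (f * δ.binom K) = 0 := by
  rw [borderOperator_mul, borderOperator_binom hδ, mul_zero]
  · simp [hδ.binom_eq, borderZero_X]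
  · intro a ha
    simp [hδ.binom_eq, pderiv_X, Pi.single_apply, apply_ite (borderZero K m n), borderZero_X,
      ha.symm]
  · intro b hb
    simp [hδ.binom_eq, pderiv_X, Pi.single_apply, apply_ite (borderZero K m n), borderZero_X,
      hb.symm]

theorem borderOperator_eq_zero_of_mem_minorIdeal (hC : ∀ δ ∈ C, δ.IsCorner)
    {f : MvPolynomial (Fin m × Fin n) K} (hf : f ∈ minorIdeal K C) :
    borderOperator K m n f = 0 := by
  suffices ∀ g, borderOperator K m n (g * f) = 0 by simpa using this 1
  induction hf using Submodule.span_induction with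
  | mem f hf =>
    obtain ⟨δ, hδ, rfl⟩ := hf
    exact borderOperator_mul_binom (hC δ hδ)
  | zero => simp
  | add f₁ f₂ _ _ h₁ h₂ => intro g; rw [mul_add, map_add, h₁, h₂, add_zero]
  | smul h f _ ih => intro g; rw [smul_eq_mul, ← mul_assoc, ih]

theorem borderZero_eq_zero_of_X_zero_mul_mem (hC : ∀ δ ∈ C, δ.IsCorner)
    {f : MvPolynomial (Fin m × Fin n) K} (hf : X (0, 0) * f ∈ minorIdeal K C) :
    borderZero K m n f = 0 := by
  rw [← borderOperator_X_zero_mul, borderOperator_eq_zero_of_mem_minorIdeal hC hf]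

theorem mk_X_zero_mul_X (hC : ∀ δ ∈ C, δ.IsCorner) {p : Fin m × Fin n} (hp : p ∈ vertexSetOf C) :
    Ideal.Quotient.mk (minorIdeal K C) (X (0, 0) * X p) =
      Ideal.Quotient.mk (minorIdeal K C) (X (0, p.2) * X (p.1, 0)) := by
  obtain ⟨δ, hδ, hp⟩ := Set.mem_iUnion₂.mp hp
  obtain ⟨ha, hb⟩ := hC δ hδ
  rcases hp with rfl | rfl | rfl | rfl
  · rw [ha, hb]
  · rw [ha, mul_comm]
  · rw [hb]
  · exact Ideal.Quotient.eq.mpr (Ideal.subset_span ⟨δ, hδ, (hC δ hδ).binom_eq.symm⟩)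

end MinorIdeal

namespace CycleIn

variable {K : Type*} [Field K] {m n : ℕ} {C : Set (Minor2 m n)} (σ : CycleIn C)

theorem snd_p_eq_snd_q (k : Fin (σ.len + 2)) : (σ.p k).2 = (σ.q k).2 :=
  snd_eq_of_vClass_eq (σ.shareV k)

theorem fst_q_eq_fst_p_add_one (k : Fin (σ.len + 2)) : (σ.q k).1 = (σ.p (k + 1)).1 :=
  fst_eq_of_hClass_eq (σ.shareH k)

theorem p_ne_q (j k : Fin (σ.len + 2)) : σ.p j ≠ σ.q k := by
  intro h
  have hjk : j = k := σ.injV ((congrArg (vClass C) h).trans (σ.shareV k).symm)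
  have hjk' : j = k + 1 := σ.injH ((congrArg (hClass C) h).trans (σ.shareH k))
  simp [← hjk] at hjk'

theorem cycleBinom_ne_zero : cycleBinom K σ ≠ 0 := by
  intro h
  have p_dvd : (X (σ.p 0) : MvPolynomial _ K) ∣ ∏ k, X (σ.q k) := by
    rw [← sub_eq_zero.mp h]
    exact Finset.dvd_prod_of_mem _ (Finset.mem_univ 0)
  obtain ⟨k, -, hk⟩ := X_prime.exists_mem_finset_dvd p_dvd
  exact σ.p_ne_q 0 k (X_dvd_X.mp hk)

variable [NeZero m] [NeZero n] {σ}

theorem borderZero_cycleBinom (hcol : ∀ k, (σ.p k).2 ≠ 0) (hrow : ∀ k, (σ.p k).1 ≠ 0) :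
    borderZero K m n (cycleBinom K σ) = cycleBinom K σ := by
  simp [cycleBinom, borderZero_X, hcol, hrow, ← snd_p_eq_snd_q, fst_q_eq_fst_p_add_one]

theorem X_zero_mul_cycleBinom_notMem (hC : ∀ δ ∈ C, δ.IsCorner)
    (hcol : ∀ k, (σ.p k).2 ≠ 0) (hrow : ∀ k, (σ.p k).1 ≠ 0) :
    X (0, 0) * cycleBinom K σ ∉ minorIdeal K C := fun h =>
  σ.cycleBinom_ne_zero <|
    (borderZero_cycleBinom hcol hrow).symm.trans (borderZero_eq_zero_of_X_zero_mul_mem hC h)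

theorem X_zero_mul_cycleBinom_mem_iff :
    X (0, 0) * cycleBinom K σ ∈ minorIdeal K C ↔
      Ideal.Quotient.mk (minorIdeal K C) (X (0, 0)) *
          ∏ k, Ideal.Quotient.mk (minorIdeal K C) (X (σ.p k)) =
        Ideal.Quotient.mk (minorIdeal K C) (X (0, 0)) *
          ∏ k, Ideal.Quotient.mk (minorIdeal K C) (X (σ.q k)) := by
  rw [cycleBinom, mul_sub, ← Ideal.Quotient.eq]
  simp only [map_mul, map_prod]

theorem mk_X_zero_mul_X_q (hC : ∀ δ ∈ C, δ.IsCorner) (k : Fin (σ.len + 2)) :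
    Ideal.Quotient.mk (minorIdeal K C) (X (0, 0) * X (σ.q k)) =
      Ideal.Quotient.mk (minorIdeal K C) (X (0, (σ.p k).2) * X ((σ.p (k + 1)).1, 0)) := by
  rw [mk_X_zero_mul_X hC (σ.q_mem k), snd_p_eq_snd_q, fst_q_eq_fst_p_add_one]

theorem X_zero_mul_cycleBinom_mem_of_snd_eq_zero (hC : ∀ δ ∈ C, δ.IsCorner)
    {k : Fin (σ.len + 2)} (hk : (σ.p k).2 = 0) :
    X (0, 0) * cycleBinom K σ ∈ minorIdeal K C := by
  let y (p : Fin m × Fin n) := Ideal.Quotient.mk (minorIdeal K C) (X p)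
  refine X_zero_mul_cycleBinom_mem_iff.mpr <|
    mul_prod_eq_mul_prod_of_cyclic _ _ _ (fun j => y ((σ.p j).1, 0)) (fun j => ?_) k ?_ ?_
  · have hp := mk_X_zero_mul_X (K := K) hC (σ.p_mem j)
    have hq := mk_X_zero_mul_X_q (K := K) (σ := σ) hC j
    simp only [map_mul] at hp hq
    linear_combination y ((σ.p (j + 1)).1, 0) * hp - y ((σ.p j).1, 0) * hq
  · simp only [y, ← hk]
  · simp only [y, ← hk, ← fst_q_eq_fst_p_add_one, snd_p_eq_snd_q]

theorem X_zero_mul_cycleBinom_mem_of_fst_eq_zero (hC : ∀ δ ∈ C, δ.IsCorner)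
    {k : Fin (σ.len + 2)} (hk : (σ.p k).1 = 0) :
    X (0, 0) * cycleBinom K σ ∈ minorIdeal K C := by
  let y (p : Fin m × Fin n) := Ideal.Quotient.mk (minorIdeal K C) (X p)
  rw [X_zero_mul_cycleBinom_mem_iff,
    ← Equiv.prod_comp (Equiv.addRight (1 : Fin (σ.len + 2)))]
  obtain ⟨k, rfl⟩ := (Equiv.addRight 1).surjective k
  -- Read from the row side, `q j` and `p (j + 1)` play the parts of `p j` and `q j`.
  refine (mul_prod_eq_mul_prod_of_cyclic _ _ _ (fun j => y (0, (σ.p j).2)) (fun j => ?_)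
    k ?_ ?_).symm
  · have hp := mk_X_zero_mul_X (K := K) hC (σ.p_mem (j + 1))
    have hq := mk_X_zero_mul_X_q (K := K) (σ := σ) hC j
    simp only [map_mul] at hp hq
    simp only [Equiv.coe_addRight]
    linear_combination y (0, (σ.p (j + 1)).2) * hq - y (0, (σ.p j).2) * hp
  · simp only [y, snd_p_eq_snd_q, ← hk, Equiv.coe_addRight, ← fst_q_eq_fst_p_add_one]
  · simp only [y, ← hk, Equiv.coe_addRight]

end CycleIn

theorem statement10 (K : Type*) [Field K] (m n : ℕ) [NeZero m] [NeZero n]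
    (C : Set (Minor2 m n)) (hC : ∀ δ ∈ C, δ.a1 = 0 ∧ δ.b1 = 0)
    (σ : CycleIn C) :
    X ((0 : Fin m), (0 : Fin n)) * cycleBinom K σ ∈ minorIdeal K C ↔
      (∃ k, vClass C (σ.p k) = vClass C ((0 : Fin m), (0 : Fin n))) ∨
      (∃ k, hClass C (σ.p k) = hClass C ((0 : Fin m), (0 : Fin n))) := by
  have hC' : ∀ δ ∈ C, δ.IsCorner := hC
  simp only [vClass_eq_vClass_zero_iff hC' (σ.p_mem _), hClass_eq_hClass_zero_iff hC' (σ.p_mem _)]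
  constructor
  · contrapose!
    rintro ⟨hcol, hrow⟩
    exact CycleIn.X_zero_mul_cycleBinom_notMem hC' hcol hrow
  · rintro (⟨k, hk⟩ | ⟨k, hk⟩)
    · exact CycleIn.X_zero_mul_cycleBinom_mem_of_snd_eq_zero hC' hk
    · exact CycleIn.X_zero_mul_cycleBinom_mem_of_fst_eq_zero hC' hk
end
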